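/- For every prime p and all integers a ≥ b ≥ c, one has (Φ_p(a,b,c) * φ₀)(e) ≥ p^{a−c}, where e is the identity of GL_3(ℚ_p). -/

import Mathlib

open MeasureTheory

noncomputable section

variable (p : ℕ) [Fact p.Prime]

/-- The diagonal element `diag(p^a, p^b, p^c)` of `GL₃(ℚ_p)`. -/
def padicDiag (a b c : ℤ) : GL (Fin 3) ℚ_[p] := by
  have hp : (p : ℚ_[p]) ≠ 0 := by
    exact_mod_cast (Nat.cast_ne_zero (R := ℚ_[p])).mpr (Fact.out : p.Prime).ne_zero
  refine ⟨Matrix.diagonal ![(p : ℚ_[p]) ^ a, (p : ℚ_[p]) ^ b, (p : ℚ_[p]) ^ c],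
    Matrix.diagonal ![(p : ℚ_[p]) ^ (-a), (p : ℚ_[p]) ^ (-b), (p : ℚ_[p]) ^ (-c)], ?_, ?_⟩ <;>
  · rw [Matrix.diagonal_mul_diagonal]
    ext i j
    fin_cases i <;> fin_cases j <;>
      simp [zpow_neg, mul_inv_cancel₀ (zpow_ne_zero _ hp), inv_mul_cancel₀ (zpow_ne_zero _ hp)]

/-- `K_p = GL₃(ℤ_p)`, viewed as the image of `GL₃(ℤ_p)` inside `GL₃(ℚ_p)`. -/
def padicK : Set (GL (Fin 3) ℚ_[p]) :=
  Set.range fun u : (Matrix (Fin 3) (Fin 3) ℤ_[p])ˣ =>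
    Units.map (RingHom.toMonoidHom (RingHom.mapMatrix (PadicInt.Coe.ringHom (p := p)))) u

/-- The double coset `K_p · diag(p^a, p^b, p^c) · K_p`. -/
def padicDoubleCoset (a b c : ℤ) : Set (GL (Fin 3) ℚ_[p]) :=
  {x | ∃ k₁ ∈ padicK p, ∃ k₂ ∈ padicK p, x = k₁ * padicDiag p a b c * k₂}

/-- `Φ_p(a,b,c)`: the characteristic function of `K_p(a,b,c)`. -/
def padicPhi (a b c : ℤ) : GL (Fin 3) ℚ_[p] → ℝ :=
  (padicDoubleCoset p a b c).indicator fun _ => (1 : ℝ)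

instance : MeasurableSpace (GL (Fin 3) ℚ_[p]) := borel _

/-- Convolution of functions on `GL₃(ℚ_p)` with respect to a measure `μ`. -/
def padicConv (μ : Measure (GL (Fin 3) ℚ_[p])) (f h : GL (Fin 3) ℚ_[p] → ℝ) :
    GL (Fin 3) ℚ_[p] → ℝ :=
  fun x => ∫ y, f y * h (y⁻¹ * x) ∂μ

/-- `A_p` is the `p`-adic Iwasawa `A`-coordinate: whenever `g = b·k` with `b` upper
triangular and `k ∈ K_p`, it returns the triple of `p`-adic valuations of the diagonal
entries of `b`. -/
def IsPadicIwasawaCoord (Ap : GL (Fin 3) ℚ_[p] → ℤ × ℤ × ℤ) : Prop :=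
  ∀ g b : GL (Fin 3) ℚ_[p], ∀ k ∈ padicK p,
    (∀ i j : Fin 3, (j : ℕ) < (i : ℕ) → (b : Matrix (Fin 3) (Fin 3) ℚ_[p]) i j = 0) →
    g = b * k →
    Ap g = (((b : Matrix (Fin 3) (Fin 3) ℚ_[p]) 0 0).valuation,
            ((b : Matrix (Fin 3) (Fin 3) ℚ_[p]) 1 1).valuation,
            ((b : Matrix (Fin 3) (Fin 3) ℚ_[p]) 2 2).valuation)

/-- The spherical function with trivial Satake parameter,
`φ₀(g) = ∫_{K_p} p^{ρ(A_p(kg))} dk`, where `ρ(a,b,c) = a − c` and the Haar probability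
measure on `K_p` is realized as the restriction of `μ` (normalized by `μ(K_p) = 1`)
to `K_p`. -/
def padicPhiZero (μ : Measure (GL (Fin 3) ℚ_[p])) (Ap : GL (Fin 3) ℚ_[p] → ℤ × ℤ × ℤ) :
    GL (Fin 3) ℚ_[p] → ℝ :=
  fun g => ∫ k in padicK p, (p : ℝ) ^ ((Ap (k * g)).1 - (Ap (k * g)).2.2) ∂μ

instance padicGLBorel : BorelSpace (GL (Fin 3) ℚ_[p]) := ⟨rfl⟩

/-- `K_p` as a subgroup. -/
def padicKSub : Subgroup (GL (Fin 3) ℚ_[p]) :=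
  (Units.map (RingHom.toMonoidHom
    (RingHom.mapMatrix (m := Fin 3) (PadicInt.Coe.ringHom (p := p))))).range

lemma mem_padicKSub (g : GL (Fin 3) ℚ_[p]) : g ∈ padicKSub p ↔ g ∈ padicK p := Iff.rfl

lemma padicK_norm_le {g : GL (Fin 3) ℚ_[p]} (hg : g ∈ padicK p) (i j : Fin 3) :
    ‖(g : Matrix (Fin 3) (Fin 3) ℚ_[p]) i j‖ ≤ 1 := by
  obtain ⟨u, rfl⟩ := hg
  exact (((u : Matrix (Fin 3) (Fin 3) ℤ_[p]) i j)).2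

lemma padicK_inv {g : GL (Fin 3) ℚ_[p]} (hg : g ∈ padicK p) : g⁻¹ ∈ padicK p :=
  (padicKSub p).inv_mem hg

lemma padicK_mul {g h : GL (Fin 3) ℚ_[p]} (hg : g ∈ padicK p) (hh : h ∈ padicK p) :
    g * h ∈ padicK p :=
  (padicKSub p).mul_mem hg hh

lemma mem_padicK_of {g : GL (Fin 3) ℚ_[p]}
    (h1 : ∀ i j, ‖(g : Matrix (Fin 3) (Fin 3) ℚ_[p]) i j‖ ≤ 1)
    (h2 : ∀ i j, ‖((g⁻¹ : GL (Fin 3) ℚ_[p]) : Matrix (Fin 3) (Fin 3) ℚ_[p]) i j‖ ≤ 1) :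
    g ∈ padicK p := by
  let f := RingHom.mapMatrix (m := Fin 3) (PadicInt.Coe.ringHom (p := p))
  have hf : Function.Injective f := by
    intro x y hxy
    ext i j
    have := congrFun (congrFun hxy i) j
    exact Subtype.ext this
  let A : Matrix (Fin 3) (Fin 3) ℤ_[p] := fun i j => ⟨_, h1 i j⟩
  let B : Matrix (Fin 3) (Fin 3) ℤ_[p] := fun i j => ⟨_, h2 i j⟩
  have hA : f A = g := rfl
  have hB : f B = (g⁻¹ : GL (Fin 3) ℚ_[p]) := rfl
  refine ⟨⟨A, B, hf ?_, hf ?_⟩, ?_⟩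
  · rw [map_mul, hA, hB, map_one, Units.mul_inv]
  · rw [map_mul, hA, hB, map_one, Units.inv_mul]
  · exact Units.ext hA

lemma padicK_isOpen : IsOpen (padicK p) := by
  have : padicK p = ⋂ i : Fin 3, ⋂ j : Fin 3,
      ({g : GL (Fin 3) ℚ_[p] | (g : Matrix (Fin 3) (Fin 3) ℚ_[p]) i j ∈
        Metric.closedBall (0 : ℚ_[p]) 1} ∩
      {g : GL (Fin 3) ℚ_[p] | ((g⁻¹ : GL (Fin 3) ℚ_[p]) : Matrix (Fin 3) (Fin 3) ℚ_[p]) i j ∈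
        Metric.closedBall (0 : ℚ_[p]) 1}) := by
    ext g
    simp only [Set.mem_iInter, Set.mem_inter_iff, Set.mem_ofPred_eq, mem_closedBall_zero_iff]
    constructor
    · intro h i j
      exact ⟨padicK_norm_le p h i j, padicK_norm_le p (padicK_inv p h) i j⟩
    · intro h
      exact mem_padicK_of p (fun i j => (h i j).1) (fun i j => (h i j).2)
  rw [this]
  refine isOpen_iInter_of_finite fun i => isOpen_iInter_of_finite fun j => IsOpen.inter ?_ ?_
  · exact (IsUltrametricDist.isOpen_closedBall (0 : ℚ_[p]) one_ne_zero).preimage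
      (Units.continuous_val.matrix_elem i j)
  · exact (IsUltrametricDist.isOpen_closedBall (0 : ℚ_[p]) one_ne_zero).preimage
      (Units.continuous_coe_inv.matrix_elem i j)

lemma padicK_isCompact : IsCompact (padicK p) := by
  have : CompactSpace (Matrix (Fin 3) (Fin 3) ℤ_[p]) :=
    inferInstanceAs (CompactSpace (Fin 3 → Fin 3 → ℤ_[p]))
  refine isCompact_range (Units.continuous_map ?_)
  refine continuous_matrix fun i j => ?_
  exact continuous_subtype_val.comp (continuous_id.matrix_elem i j)

lemma padicDoubleCoset_isCompact (a b c : ℤ) : IsCompact (padicDoubleCoset p a b c) := by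
  have : padicDoubleCoset p a b c =
      Set.image (fun x : GL (Fin 3) ℚ_[p] × GL (Fin 3) ℚ_[p] => x.1 * padicDiag p a b c * x.2)
        (padicK p ×ˢ padicK p) := by
    ext x
    constructor
    · rintro ⟨k₁, h₁, k₂, h₂, rfl⟩
      exact ⟨(k₁, k₂), ⟨h₁, h₂⟩, rfl⟩
    · rintro ⟨⟨k₁, k₂⟩, ⟨h₁, h₂⟩, rfl⟩
      exact ⟨k₁, h₁, k₂, h₂, rfl⟩
  rw [this]
  exact ((padicK_isCompact p).prod (padicK_isCompact p)).image (by fun_prop)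

/-- right `K`-invariant functions are continuous -/
lemma continuous_of_rightInv (f : GL (Fin 3) ℚ_[p] → ℝ)
    (hf : ∀ g, ∀ k ∈ padicK p, f (g * k) = f g) : Continuous f := by
  rw [continuous_iff_continuousAt]
  intro g
  have : {x | g⁻¹ * x ∈ padicK p} ∈ nhds g := by
    refine ((padicK_isOpen p).preimage (continuous_const_mul g⁻¹)).mem_nhds ?_
    have h1 : (1 : GL (Fin 3) ℚ_[p]) ∈ padicK p := (padicKSub p).one_mem
    simpa using h1
  refine (continuousAt_const (y := f g)).congr ?_
  filter_upwards [this] with x hx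
  have := hf g _ hx
  simpa using this.symm

/-- one column elimination step -/
lemma column_step (g : GL (Fin 3) ℚ_[p]) (r i j : Fin 3) (hij : i ≠ j) :
    ∃ k ∈ padicK p,
      ((g * k : GL (Fin 3) ℚ_[p]) : Matrix (Fin 3) (Fin 3) ℚ_[p]) r i = 0 ∧
      (∀ s l, l ≠ i → l ≠ j →
        ((g * k : GL (Fin 3) ℚ_[p]) : Matrix (Fin 3) (Fin 3) ℚ_[p]) s l =
          (g : Matrix (Fin 3) (Fin 3) ℚ_[p]) s l) ∧
      (∀ s, (g : Matrix (Fin 3) (Fin 3) ℚ_[p]) s i = 0 →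
        (g : Matrix (Fin 3) (Fin 3) ℚ_[p]) s j = 0 →
        ((g * k : GL (Fin 3) ℚ_[p]) : Matrix (Fin 3) (Fin 3) ℚ_[p]) s i = 0 ∧
        ((g * k : GL (Fin 3) ℚ_[p]) : Matrix (Fin 3) (Fin 3) ℚ_[p]) s j = 0) := by
  -- the main case
  have key : ∀ g : GL (Fin 3) ℚ_[p],
      ‖(g : Matrix (Fin 3) (Fin 3) ℚ_[p]) r i‖ ≤ ‖(g : Matrix (Fin 3) (Fin 3) ℚ_[p]) r j‖ →
      ∃ k ∈ padicK p,
      ((g * k : GL (Fin 3) ℚ_[p]) : Matrix (Fin 3) (Fin 3) ℚ_[p]) r i = 0 ∧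
      (∀ s l, l ≠ i →
        ((g * k : GL (Fin 3) ℚ_[p]) : Matrix (Fin 3) (Fin 3) ℚ_[p]) s l =
          (g : Matrix (Fin 3) (Fin 3) ℚ_[p]) s l) ∧
      (∀ s, (g : Matrix (Fin 3) (Fin 3) ℚ_[p]) s i = 0 →
        (g : Matrix (Fin 3) (Fin 3) ℚ_[p]) s j = 0 →
        ((g * k : GL (Fin 3) ℚ_[p]) : Matrix (Fin 3) (Fin 3) ℚ_[p]) s i = 0) := by
    intro g h
    set M := (g : Matrix (Fin 3) (Fin 3) ℚ_[p]) with hM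
    set t : ℚ_[p] := M r i / M r j with ht
    have ht1 : ‖t‖ ≤ 1 := by
      rw [ht, norm_div]
      exact div_le_one_of_le₀ h (norm_nonneg _)
    have hb : ∀ t : ℚ_[p], ‖t‖ ≤ 1 → ∀ x y, ‖Matrix.transvection j i t x y‖ ≤ 1 := by
      intro t ht x y
      by_cases hxy : x = y
      · subst hxy
        have : ¬ (j = x ∧ i = x) := fun h => hij (h.2.trans h.1.symm)
        simp [Matrix.transvection, Matrix.single_apply, this]
      · by_cases h2 : j = x ∧ i = y
        · simp [Matrix.transvection, Matrix.single_apply, h2, Matrix.one_apply, hxy, ht]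
        · simp [Matrix.transvection, Matrix.single_apply, h2, Matrix.one_apply, hxy]
    let k : GL (Fin 3) ℚ_[p] := ⟨Matrix.transvection j i (-t), Matrix.transvection j i t,
      by rw [Matrix.transvection_mul_transvection_same j i hij.symm]; simp,
      by rw [Matrix.transvection_mul_transvection_same j i hij.symm]; simp⟩
    have hgk : ((g * k : GL (Fin 3) ℚ_[p]) : Matrix (Fin 3) (Fin 3) ℚ_[p]) =
      M * Matrix.transvection j i (-t) := rfl
    refine ⟨k, mem_padicK_of p (hb _ (by simpa using ht1)) (hb _ ht1), ?_, ?_, ?_⟩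
    · rw [hgk, Matrix.mul_transvection_apply_same]
      by_cases h0 : M r j = 0
      · rw [h0, norm_zero, norm_le_zero_iff] at h
        simp [h, h0]
      · rw [ht]; field_simp; ring
    · intro s l hl
      rw [hgk, Matrix.mul_transvection_apply_of_ne _ _ _ _ hl]
    · intro s h1 h2
      rw [hgk, Matrix.mul_transvection_apply_same, h1, h2]; simp
  rcases le_total ‖(g : Matrix (Fin 3) (Fin 3) ℚ_[p]) r i‖
    ‖(g : Matrix (Fin 3) (Fin 3) ℚ_[p]) r j‖ with h | h
  · obtain ⟨k, hk, h1, h2, h3⟩ := key g h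
    refine ⟨k, hk, h1, fun s l hl _ => h2 s l hl, fun s ha hb => ⟨h3 s ha hb, ?_⟩⟩
    rw [h2 s j hij.symm, hb]
  · let w : GL (Fin 3) ℚ_[p] := ⟨Matrix.swap ℚ_[p] i j, Matrix.swap ℚ_[p] i j,
      Matrix.swap_mul_self i j, Matrix.swap_mul_self i j⟩
    have hb : ∀ x y, ‖Matrix.swap ℚ_[p] i j x y‖ ≤ 1 := by
      intro x y
      rw [Matrix.swap, Equiv.Perm.permMatrix]
      change ‖(if y ∈ (Equiv.swap i j).toPEquiv x then (1 : ℚ_[p]) else 0)‖ ≤ 1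
      split_ifs <;> simp
    have hw : w ∈ padicK p := mem_padicK_of p hb hb
    have hgw : ((g * w : GL (Fin 3) ℚ_[p]) : Matrix (Fin 3) (Fin 3) ℚ_[p]) =
      (g : Matrix (Fin 3) (Fin 3) ℚ_[p]) * Matrix.swap ℚ_[p] i j := rfl
    have e1 : ∀ s, ((g * w : GL (Fin 3) ℚ_[p]) : Matrix (Fin 3) (Fin 3) ℚ_[p]) s i =
        (g : Matrix (Fin 3) (Fin 3) ℚ_[p]) s j := by
      intro s; rw [hgw, Matrix.mul_swap_apply_left]
    have e2 : ∀ s, ((g * w : GL (Fin 3) ℚ_[p]) : Matrix (Fin 3) (Fin 3) ℚ_[p]) s j =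
        (g : Matrix (Fin 3) (Fin 3) ℚ_[p]) s i := by
      intro s; rw [hgw, Matrix.mul_swap_apply_right]
    obtain ⟨k, hk, h1, h2, h3⟩ := key (g * w) (by rw [e1, e2]; exact h)
    refine ⟨w * k, padicK_mul p hw hk, ?_, ?_, ?_⟩
    · rw [← mul_assoc, h1]
    · intro s l hl hl'
      rw [← mul_assoc, h2 s l hl, hgw, Matrix.mul_swap_of_ne hl hl']
    · intro s ha hb
      rw [← mul_assoc]
      refine ⟨h3 s (by rw [e1, hb]) (by rw [e2, ha]), ?_⟩
      rw [h2 s j hij.symm, e2, ha]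

lemma iwasawa_exists (g : GL (Fin 3) ℚ_[p]) : ∃ b : GL (Fin 3) ℚ_[p], ∃ k ∈ padicK p,
    (∀ i j : Fin 3, (j : ℕ) < (i : ℕ) → (b : Matrix (Fin 3) (Fin 3) ℚ_[p]) i j = 0) ∧
    g = b * k := by
  obtain ⟨k₁, hk₁, a1, -, -⟩ := column_step p g 2 0 1 (by decide)
  obtain ⟨k₂, hk₂, b1, b2, -⟩ := column_step p (g * k₁) 2 1 2 (by decide)
  obtain ⟨k₃, hk₃, c1, -, c3⟩ := column_step p (g * k₁ * k₂) 1 0 1 (by decide)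
  have b3 := b2 2 0 (by decide) (by decide)
  rw [a1] at b3
  obtain ⟨d1, d2⟩ := c3 2 b3 b1
  refine ⟨g * k₁ * k₂ * k₃, (k₁ * k₂ * k₃)⁻¹,
    padicK_inv p (padicK_mul p (padicK_mul p hk₁ hk₂) hk₃), ?_, by group⟩
  intro i j hij
  fin_cases i <;> fin_cases j <;> first | exact absurd hij (by decide) | assumption

lemma matrix_bd_mul {r s : ℝ} (hr : 0 ≤ r) (hs : 0 ≤ s) (M N : Matrix (Fin 3) (Fin 3) ℚ_[p])
    (hM : ∀ i j, ‖M i j‖ ≤ r) (hN : ∀ i j, ‖N i j‖ ≤ s) (i j : Fin 3) :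
    ‖(M * N) i j‖ ≤ r * s := by
  rw [Matrix.mul_apply]
  refine IsUltrametricDist.norm_sum_le_of_forall_le_of_nonneg (mul_nonneg hr hs) ?_
  intro l _
  rw [norm_mul]
  exact mul_le_mul (hM i l) (hN l j) (norm_nonneg _) hr

lemma padicDiag_inv (a b c : ℤ) : (padicDiag p a b c)⁻¹ = padicDiag p (-a) (-b) (-c) :=
  Units.ext rfl

lemma doubleCoset_inv {a b c : ℤ} {y : GL (Fin 3) ℚ_[p]} (hy : y ∈ padicDoubleCoset p a b c) :
    y⁻¹ ∈ padicDoubleCoset p (-a) (-b) (-c) := by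
  obtain ⟨k₁, h₁, k₂, h₂, rfl⟩ := hy
  refine ⟨k₂⁻¹, padicK_inv p h₂, k₁⁻¹, padicK_inv p h₁, ?_⟩
  rw [← padicDiag_inv]; group

lemma doubleCoset_mul {a b c : ℤ} {y k k' : GL (Fin 3) ℚ_[p]}
    (hy : y ∈ padicDoubleCoset p a b c) (hk : k ∈ padicK p) (hk' : k' ∈ padicK p) :
    k * y * k' ∈ padicDoubleCoset p a b c := by
  obtain ⟨k₁, h₁, k₂, h₂, rfl⟩ := hy
  exact ⟨k * k₁, padicK_mul p hk h₁, k₂ * k', padicK_mul p h₂ hk', by group⟩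

lemma doubleCoset_norm_le {a b c m : ℤ} (ha : m ≤ a) (hb : m ≤ b) (hc : m ≤ c)
    {y : GL (Fin 3) ℚ_[p]}
    (hy : y ∈ padicDoubleCoset p a b c) (i j : Fin 3) :
    ‖(y : Matrix (Fin 3) (Fin 3) ℚ_[p]) i j‖ ≤ (p : ℝ) ^ (-m) := by
  obtain ⟨k₁, h₁, k₂, h₂, rfl⟩ := hy
  have hp1 : (1 : ℝ) ≤ p := by exact_mod_cast (Fact.out : p.Prime).one_le
  have hp0 : (0 : ℝ) ≤ (p : ℝ) ^ (-m) := by positivity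
  have hD : ∀ i j, ‖(padicDiag p a b c : Matrix (Fin 3) (Fin 3) ℚ_[p]) i j‖ ≤ (p : ℝ) ^ (-m) := by
    intro i j
    have : (padicDiag p a b c : Matrix (Fin 3) (Fin 3) ℚ_[p]) =
      Matrix.diagonal ![(p : ℚ_[p]) ^ a, (p : ℚ_[p]) ^ b, (p : ℚ_[p]) ^ c] := rfl
    rw [this]
    by_cases hij : i = j
    · subst hij
      rw [Matrix.diagonal_apply_eq]
      fin_cases i
      · simpa [Padic.norm_p_zpow] using zpow_le_zpow_right₀ hp1 (neg_le_neg ha)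
      · simpa [Padic.norm_p_zpow] using zpow_le_zpow_right₀ hp1 (neg_le_neg hb)
      · simpa [Padic.norm_p_zpow] using zpow_le_zpow_right₀ hp1 (neg_le_neg hc)
    · rw [Matrix.diagonal_apply_ne _ hij, norm_zero]; exact hp0
  have e := matrix_bd_mul p (mul_nonneg zero_le_one hp0) zero_le_one _ _
    (matrix_bd_mul p zero_le_one hp0 _ _ (padicK_norm_le p h₁) hD) (padicK_norm_le p h₂) i j
  rw [one_mul, mul_one] at e
  exact e

lemma valuation_ge_of_norm {x : ℚ_[p]} (hx : x ≠ 0) {m : ℤ} (h : ‖x‖ ≤ (p : ℝ) ^ (-m)) :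
    m ≤ x.valuation := by
  have hp1 : (1 : ℝ) < p := by exact_mod_cast (Fact.out : p.Prime).one_lt
  rw [Padic.norm_eq_zpow_neg_valuation hx, zpow_le_zpow_iff_right₀ hp1] at h
  omega

lemma upper_diag_inv (b : GL (Fin 3) ℚ_[p])
    (hb : ∀ i j : Fin 3, (j : ℕ) < (i : ℕ) → (b : Matrix (Fin 3) (Fin 3) ℚ_[p]) i j = 0) :
    (∀ i, (b : Matrix (Fin 3) (Fin 3) ℚ_[p]) i i ≠ 0) ∧
    (b : Matrix (Fin 3) (Fin 3) ℚ_[p]) 0 0 *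
      ((b⁻¹ : GL (Fin 3) ℚ_[p]) : Matrix (Fin 3) (Fin 3) ℚ_[p]) 0 0 = 1 ∧
    (b : Matrix (Fin 3) (Fin 3) ℚ_[p]) 2 2 *
      ((b⁻¹ : GL (Fin 3) ℚ_[p]) : Matrix (Fin 3) (Fin 3) ℚ_[p]) 2 2 = 1 := by
  have h10 := hb 1 0 (by decide)
  have h20 := hb 2 0 (by decide)
  have h21 := hb 2 1 (by decide)
  have hdet : (b : Matrix (Fin 3) (Fin 3) ℚ_[p]).det ≠ 0 :=
    ((Matrix.isUnit_iff_isUnit_det _).1 b.isUnit).ne_zero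
  rw [Matrix.det_fin_three, h10, h20, h21] at hdet
  have e1 : (b : Matrix (Fin 3) (Fin 3) ℚ_[p]) *
    ((b⁻¹ : GL (Fin 3) ℚ_[p]) : Matrix (Fin 3) (Fin 3) ℚ_[p]) = 1 := Units.mul_inv b
  have e2 : ((b⁻¹ : GL (Fin 3) ℚ_[p]) : Matrix (Fin 3) (Fin 3) ℚ_[p]) *
    (b : Matrix (Fin 3) (Fin 3) ℚ_[p]) = 1 := Units.inv_mul b
  have f1 := congrFun (congrFun e1 2) 2
  have f2 := congrFun (congrFun e2 0) 0
  rw [Matrix.mul_apply, Fin.sum_univ_three] at f1 f2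
  refine ⟨?_, ?_, ?_⟩
  · intro i hi
    apply hdet
    fin_cases i <;> simp_all
  · rw [h10, h20] at f2
    rw [mul_comm]; simpa using f2
  · rw [h20, h21] at f1
    simpa using f1

lemma Ap_bound (Ap : GL (Fin 3) ℚ_[p] → ℤ × ℤ × ℤ) (hAp : IsPadicIwasawaCoord p Ap)
    {a b c : ℤ} (hab : b ≤ a) (hbc : c ≤ b) {g : GL (Fin 3) ℚ_[p]}
    (hg : g ∈ padicDoubleCoset p (-a) (-b) (-c)) :
    c - a ≤ (Ap g).1 - (Ap g).2.2 := by
  obtain ⟨x, k, hk, hx, rfl⟩ := iwasawa_exists p g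
  rw [hAp _ x k hk hx rfl]
  have hxm : x ∈ padicDoubleCoset p (-a) (-b) (-c) := by
    have := doubleCoset_mul p hg (padicKSub p).one_mem (padicK_inv p hk)
    simpa using this
  have hxi := doubleCoset_inv p hxm
  simp only [neg_neg] at hxi
  obtain ⟨hne, h0, h2⟩ := upper_diag_inv p x hx
  have v0 := valuation_ge_of_norm p (hne 0)
    (doubleCoset_norm_le p (m := -a) (by omega) (by omega) (by omega) hxm 0 0)
  have hn2 := right_ne_zero_of_mul_eq_one h2
  have v2 := valuation_ge_of_norm p hn2
    (doubleCoset_norm_le p (m := c) (by omega) (by omega) (by omega) hxi 2 2)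
  have := congrArg Padic.valuation h2
  rw [Padic.valuation_mul (hne 2) hn2, Padic.valuation_one] at this
  simp only
  omega

lemma Ap_rightInv (Ap : GL (Fin 3) ℚ_[p] → ℤ × ℤ × ℤ) (hAp : IsPadicIwasawaCoord p Ap)
    (g k : GL (Fin 3) ℚ_[p]) (hk : k ∈ padicK p) : Ap (g * k) = Ap g := by
  obtain ⟨x, k', hk', hx, rfl⟩ := iwasawa_exists p g
  rw [hAp _ x k' hk' hx rfl, hAp _ x (k' * k) (padicK_mul p hk' hk) hx (mul_assoc _ _ _)]

/-- The unipotent element with integer entries. -/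
def padicUni (x y z : ℤ) : GL (Fin 3) ℚ_[p] :=
  ⟨!![1, (x : ℚ_[p]), z; 0, 1, y; 0, 0, 1], !![1, -(x : ℚ_[p]), x * y - z; 0, 1, -y; 0, 0, 1],
    by ext i j; fin_cases i <;> fin_cases j <;> simp [Matrix.mul_apply, Fin.sum_univ_three] <;> ring,
    by ext i j; fin_cases i <;> fin_cases j <;> simp [Matrix.mul_apply, Fin.sum_univ_three] <;> ring⟩

lemma padicUni_mem (x y z : ℤ) : padicUni p x y z ∈ padicK p := by
  have h := fun n : ℤ => Padic.norm_int_le_one (p := p) n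
  refine mem_padicK_of p ?_ ?_
  · intro i j
    fin_cases i <;> fin_cases j <;> simp [padicUni, h]
  · have e : ((x : ℚ_[p]) * y - z) = ((x * y - z : ℤ) : ℚ_[p]) := by push_cast; ring
    have : ‖((x : ℚ_[p]) * y - z)‖ ≤ 1 := by rw [e]; exact h _
    intro i j
    change ‖(!![1, -(x : ℚ_[p]), x * y - z; 0, 1, -y; 0, 0, 1] :
      Matrix (Fin 3) (Fin 3) ℚ_[p]) i j‖ ≤ 1
    fin_cases i <;> fin_cases j <;> simp [h, this]

lemma eq_of_scaled {m n : ℤ} (hmn : n ≤ m) {t : ℚ_[p]} (ht : ‖t‖ ≤ 1) {u v : ℕ}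
    (hu : u < p ^ (m - n).toNat) (hv : v < p ^ (m - n).toNat)
    (h : (p : ℚ_[p]) ^ m * t = ((u : ℤ) - (v : ℤ) : ℤ) * (p : ℚ_[p]) ^ n) : u = v := by
  have hp : (p : ℚ_[p]) ≠ 0 := by exact_mod_cast (Fact.out : p.Prime).ne_zero
  have h2 : (((u : ℤ) - (v : ℤ) : ℤ) : ℚ_[p]) = (p : ℚ_[p]) ^ (m - n) * t := by
    rw [zpow_sub₀ hp, div_mul_eq_mul_div, eq_div_iff (zpow_ne_zero _ hp), h]
  have h3 : ‖(((u : ℤ) - (v : ℤ) : ℤ) : ℚ_[p])‖ ≤ (p : ℝ) ^ (-((m - n).toNat : ℤ)) := by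
    rw [h2, norm_mul, Padic.norm_p_zpow, Int.toNat_of_nonneg (by omega)]
    exact mul_le_of_le_one_right (by positivity) ht
  rw [Padic.norm_int_le_pow_iff_dvd] at h3
  have h4 : ((u : ℤ) - v).natAbs < p ^ (m - n).toNat := by omega
  have h5 := Int.eq_zero_of_dvd_of_natAbs_lt_natAbs h3 (by simpa [Int.natAbs_pow] using h4)
  omega

lemma padicUni_inj {a b c : ℤ} (hab : b ≤ a) (hbc : c ≤ b) {x y z x' y' z' : ℕ}
    (hx : x < p ^ (a - b).toNat) (hx' : x' < p ^ (a - b).toNat)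
    (hy : y < p ^ (b - c).toNat) (hy' : y' < p ^ (b - c).toNat)
    (hz : z < p ^ (a - c).toNat) (hz' : z' < p ^ (a - c).toNat)
    {k : GL (Fin 3) ℚ_[p]} (hk : k ∈ padicK p)
    (h : padicUni p x y z * padicDiag p a b c = padicUni p x' y' z' * padicDiag p a b c * k) :
    x = x' ∧ y = y' ∧ z = z' := by
  have hp : (p : ℚ_[p]) ≠ 0 := by exact_mod_cast (Fact.out : p.Prime).ne_zero
  have hn := padicK_norm_le p hk
  have e := congrArg (fun g : GL (Fin 3) ℚ_[p] => (g : Matrix (Fin 3) (Fin 3) ℚ_[p])) h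
  simp only [Units.val_mul] at e
  set M := (k : Matrix (Fin 3) (Fin 3) ℚ_[p])
  have hD : (padicDiag p a b c : Matrix (Fin 3) (Fin 3) ℚ_[p]) =
      Matrix.diagonal ![(p : ℚ_[p]) ^ a, (p : ℚ_[p]) ^ b, (p : ℚ_[p]) ^ c] := rfl
  have hU : ∀ x y z : ℤ, (padicUni p x y z : Matrix (Fin 3) (Fin 3) ℚ_[p]) =
      !![1, (x : ℚ_[p]), z; 0, 1, y; 0, 0, 1] := fun _ _ _ => rfl
  rw [hD, hU, hU] at e
  have ent := fun i j => congrFun (congrFun e i) j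
  have e21 : 0 = (p : ℚ_[p]) ^ c * M 2 1 := by
    simpa [Matrix.mul_apply, Fin.sum_univ_three, Matrix.vecMul_diagonal] using ent 2 1
  have e22 : (p : ℚ_[p]) ^ c = (p : ℚ_[p]) ^ c * M 2 2 := by
    simpa [Matrix.mul_apply, Fin.sum_univ_three, Matrix.vecMul_diagonal] using ent 2 2
  have e11 : (p : ℚ_[p]) ^ b = (p : ℚ_[p]) ^ b * M 1 1 + y' * (p : ℚ_[p]) ^ c * M 2 1 := by
    simpa [Matrix.mul_apply, Fin.sum_univ_three, Matrix.vecMul_diagonal] using ent 1 1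
  have e12 : y * (p : ℚ_[p]) ^ c = (p : ℚ_[p]) ^ b * M 1 2 + y' * (p : ℚ_[p]) ^ c * M 2 2 := by
    simpa [Matrix.mul_apply, Fin.sum_univ_three, Matrix.vecMul_diagonal] using ent 1 2
  have e01 : x * (p : ℚ_[p]) ^ b = (p : ℚ_[p]) ^ a * M 0 1 + x' * (p : ℚ_[p]) ^ b * M 1 1
      + z' * (p : ℚ_[p]) ^ c * M 2 1 := by
    simpa [Matrix.mul_apply, Fin.sum_univ_three, Matrix.vecMul_diagonal] using ent 0 1
  have e02 : z * (p : ℚ_[p]) ^ c = (p : ℚ_[p]) ^ a * M 0 2 + x' * (p : ℚ_[p]) ^ b * M 1 2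
      + z' * (p : ℚ_[p]) ^ c * M 2 2 := by
    simpa [Matrix.mul_apply, Fin.sum_univ_three, Matrix.vecMul_diagonal] using ent 0 2
  have pb := zpow_ne_zero b hp
  have pc := zpow_ne_zero c hp
  have k21 : M 2 1 = 0 := (mul_eq_zero.1 e21.symm).resolve_left pc
  have k22 : M 2 2 = 1 := mul_left_cancel₀ pc (by linear_combination -e22)
  rw [k21] at e11 e01
  rw [k22] at e12 e02
  have hyy : y = y' := eq_of_scaled p hbc (hn 1 2) hy hy' (by
    push_cast; linear_combination -e12)
  subst hyy
  have k12 : M 1 2 = 0 := by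
    have : (p : ℚ_[p]) ^ b * M 1 2 = 0 := by linear_combination -e12
    exact (mul_eq_zero.1 this).resolve_left pb
  have k11 : M 1 1 = 1 := mul_left_cancel₀ pb (by linear_combination -e11)
  rw [k11] at e01
  rw [k12] at e02
  refine ⟨eq_of_scaled p hab (hn 0 1) hx hx' (by push_cast; linear_combination -e01), rfl,
    eq_of_scaled p (hbc.trans hab) (hn 0 2) hz hz' (by push_cast; linear_combination -e02)⟩

lemma doubleCoset_measure (μ : Measure (GL (Fin 3) ℚ_[p])) [μ.IsHaarMeasure]
    (hμ : μ (padicK p) = 1) {a b c : ℤ} (hab : b ≤ a) (hbc : c ≤ b) :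
    (p : ℝ) ^ (2 * (a - c)) ≤ μ.real (padicDoubleCoset p a b c) := by
  let I := Fin (p ^ (a - b).toNat) × Fin (p ^ (b - c).toNat) × Fin (p ^ (a - c).toNat)
  let u : I → GL (Fin 3) ℚ_[p] := fun i =>
    padicUni p (i.1 : ℕ) (i.2.1 : ℕ) (i.2.2 : ℕ) * padicDiag p a b c
  let S : I → Set (GL (Fin 3) ℚ_[p]) := fun i => (fun h => (u i)⁻¹ * h) ⁻¹' padicK p
  have hSm : ∀ i, MeasurableSet (S i) := fun i =>
    ((padicK_isOpen p).preimage (continuous_const_mul _)).measurableSet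
  have hS1 : ∀ i, μ (S i) = 1 := fun i => by rw [measure_preimage_mul, hμ]
  have hdisj : Pairwise (Function.onFun Disjoint S) := by
    intro i j hij
    rw [Function.onFun, Set.disjoint_left]
    intro g hi hj
    apply hij
    have hk : (u j)⁻¹ * u i ∈ padicK p := by
      have := padicK_mul p hj (padicK_inv p hi)
      simpa [mul_assoc] using this
    obtain ⟨h1, h2, h3⟩ := padicUni_inj p hab hbc i.1.2 j.1.2 i.2.1.2 j.2.1.2 i.2.2.2 j.2.2.2 hk
      (show u i = u j * _ by group)
    exact Prod.ext (Fin.ext h1) (Prod.ext (Fin.ext h2) (Fin.ext h3))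
  have hsub : (⋃ i, S i) ⊆ padicDoubleCoset p a b c := by
    intro g hg
    obtain ⟨i, hi⟩ := Set.mem_iUnion.1 hg
    exact ⟨_, padicUni_mem p (i.1 : ℕ) (i.2.1 : ℕ) (i.2.2 : ℕ), _, hi, (mul_inv_cancel_left (u i) g).symm⟩
  have hfin : μ (padicDoubleCoset p a b c) ≠ ⊤ := (padicDoubleCoset_isCompact p a b c).measure_ne_top
  have hU : μ.real (⋃ i, S i) = (p : ℝ) ^ (2 * (a - c)) := by
    rw [Measure.real, measure_iUnion hdisj hSm]
    simp only [hS1, tsum_fintype, Finset.sum_const, Finset.card_univ, nsmul_eq_mul, mul_one]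
    rw [ENNReal.toReal_natCast]
    have : Fintype.card I = p ^ ((a - b).toNat + ((b - c).toNat + (a - c).toNat)) := by
      simp [I, pow_add]
    rw [this, Nat.cast_pow, ← zpow_natCast]
    congr 1
    push_cast
    rw [Int.toNat_of_nonneg (by omega), Int.toNat_of_nonneg (by omega),
      Int.toNat_of_nonneg (by omega)]
    ring
  rw [← hU]
  exact measureReal_mono hsub hfin

/-- for all `a ≥ b ≥ c`, one has `(Φ_p(a,b,c) * φ₀)(e) ≥ p^{a−c}`. -/
theorem statement5 (μ : Measure (GL (Fin 3) ℚ_[p])) [μ.IsHaarMeasure]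
    (hμ : μ (padicK p) = 1)
    (Ap : GL (Fin 3) ℚ_[p] → ℤ × ℤ × ℤ) (hAp : IsPadicIwasawaCoord p Ap)
    (a b c : ℤ) (hab : b ≤ a) (hbc : c ≤ b) :
    (p : ℝ) ^ (a - c) ≤ padicConv p μ (padicPhi p a b c) (padicPhiZero p μ Ap) 1 := by
  have hp0 : (0 : ℝ) < p := by exact_mod_cast (Fact.out : p.Prime).pos
  have hp1 : (1 : ℝ) ≤ p := by exact_mod_cast (Fact.out : p.Prime).one_le
  have hK := (padicK_isOpen p).measurableSet
  have hFc : Continuous fun g => (p : ℝ) ^ ((Ap g).1 - (Ap g).2.2) :=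
    continuous_of_rightInv p _ fun g k hk => by simp only [Ap_rightInv p Ap hAp g k hk]
  have hphi : Continuous (padicPhiZero p μ Ap) :=
    continuous_of_rightInv p _ fun g k hk => by
      simp only [padicPhiZero, ← mul_assoc, Ap_rightInv p Ap hAp _ k hk]
  have hlow : ∀ y ∈ padicDoubleCoset p a b c,
      (p : ℝ) ^ (c - a) ≤ padicPhiZero p μ Ap (y⁻¹ * 1) := by
    intro y hy
    have h1 : ∫ k in padicK p, (p : ℝ) ^ (c - a) ∂μ = (p : ℝ) ^ (c - a) := by
      rw [setIntegral_const, Measure.real, hμ]; simp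
    rw [← h1]
    unfold padicPhiZero
    refine setIntegral_mono_on ?_ ?_ hK ?_
    · exact continuous_const.continuousOn.integrableOn_compact (padicK_isCompact p)
    · exact (hFc.comp (continuous_mul_const (y⁻¹ * 1))).continuousOn.integrableOn_compact
        (padicK_isCompact p)
    · intro k hk
      refine zpow_le_zpow_right₀ hp1 (Ap_bound p Ap hAp hab hbc ?_)
      have := doubleCoset_mul p (doubleCoset_inv p hy) hk (padicKSub p).one_mem
      simpa using this
  have hC := padicDoubleCoset_isCompact p a b c
  have hCm : MeasurableSet (padicDoubleCoset p a b c) := hC.isClosed.measurableSet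
  have e : padicConv p μ (padicPhi p a b c) (padicPhiZero p μ Ap) 1 =
      ∫ y in padicDoubleCoset p a b c, padicPhiZero p μ Ap (y⁻¹ * 1) ∂μ := by
    rw [← integral_indicator hCm]
    unfold padicConv padicPhi
    congr 1
    ext y
    by_cases hy : y ∈ padicDoubleCoset p a b c <;> simp [hy]
  have hinv : Continuous fun y : GL (Fin 3) ℚ_[p] => y⁻¹ * 1 :=
    (continuous_mul_const 1).comp continuous_inv
  have hcont : Continuous fun y : GL (Fin 3) ℚ_[p] => padicPhiZero p μ Ap (y⁻¹ * 1) :=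
    hphi.comp hinv
  rw [e]
  calc (p : ℝ) ^ (a - c) = (p : ℝ) ^ (2 * (a - c)) * (p : ℝ) ^ (c - a) := by
        rw [← zpow_add₀ hp0.ne']; congr 1; ring
    _ ≤ μ.real (padicDoubleCoset p a b c) * (p : ℝ) ^ (c - a) := by
        gcongr
        exact doubleCoset_measure p μ hμ hab hbc
    _ = ∫ y in padicDoubleCoset p a b c, (p : ℝ) ^ (c - a) ∂μ := by
        rw [setIntegral_const, smul_eq_mul]
    _ ≤ _ := by
        refine setIntegral_mono_on ?_ ?_ hCm hlow
        · exact continuous_const.continuousOn.integrableOn_compact hC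
        · exact hcont.continuousOn.integrableOn_compact hC

end
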